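/- Let R be an invertible n²×n² matrix over k satisfying the quantum Yang–Baxter equation, and suppose R^{t₂} and (R⁻¹)^{t₁} are invertible. Then: (i) (Rᵗ)₂₃·((R^{t₂})⁻¹)₁₃·((R^{t₂})⁻¹)₁₂ = ((R^{t₂})⁻¹)₁₂·((R^{t₂})⁻¹)₁₃·(Rᵗ)₂₃; (ii) (Rᵗ)₁₂·(((R⁻¹)^{t₁})⁻¹)₂₃·(((R⁻¹)^{t₁})⁻¹)₁₃ = (((R⁻¹)^{t₁})⁻¹)₁₃·(((R⁻¹)^{t₁})⁻¹)₂₃·(Rᵗ)₁₂. -/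

import Mathlib

open Matrix

/-- Partial transpose in the first factor: `(M^{t₁})^{(i,j)}_{(k,l)} = M^{(k,j)}_{(i,l)}`. -/
def pt1 {α : Type*} {n : ℕ} (M : Matrix (Fin n × Fin n) (Fin n × Fin n) α) :
    Matrix (Fin n × Fin n) (Fin n × Fin n) α :=
  Matrix.of fun p q => M (q.1, p.2) (p.1, q.2)

/-- Partial transpose in the second factor: `(M^{t₂})^{(i,j)}_{(k,l)} = M^{(i,l)}_{(k,j)}`. -/
def pt2 {α : Type*} {n : ℕ} (M : Matrix (Fin n × Fin n) (Fin n × Fin n) α) :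
    Matrix (Fin n × Fin n) (Fin n × Fin n) α :=
  Matrix.of fun p q => M (p.1, q.2) (q.1, p.2)

/-- `M₁₂` acting on triples: `(M₁₂)^{(i,j,m)}_{(k,l,p)} = M^{(i,j)}_{(k,l)} δ_{mp}`. -/
def L12 {α : Type*} [Semiring α] {n : ℕ} (M : Matrix (Fin n × Fin n) (Fin n × Fin n) α) :
    Matrix (Fin n × Fin n × Fin n) (Fin n × Fin n × Fin n) α :=
  Matrix.of fun a b => if a.2.2 = b.2.2 then M (a.1, a.2.1) (b.1, b.2.1) else 0

/-- `M₂₃` acting on triples: `(M₂₃)^{(m,i,j)}_{(p,k,l)} = δ_{mp} M^{(i,j)}_{(k,l)}`. -/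
def L23 {α : Type*} [Semiring α] {n : ℕ} (M : Matrix (Fin n × Fin n) (Fin n × Fin n) α) :
    Matrix (Fin n × Fin n × Fin n) (Fin n × Fin n × Fin n) α :=
  Matrix.of fun a b => if a.1 = b.1 then M (a.2.1, a.2.2) (b.2.1, b.2.2) else 0

/-- `M₁₃` acting on triples: `(M₁₃)^{(i,m,j)}_{(k,p,l)} = δ_{mp} M^{(i,j)}_{(k,l)}`. -/
def L13 {α : Type*} [Semiring α] {n : ℕ} (M : Matrix (Fin n × Fin n) (Fin n × Fin n) α) :
    Matrix (Fin n × Fin n × Fin n) (Fin n × Fin n × Fin n) α :=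
  Matrix.of fun a b => if a.2.1 = b.2.1 then M (a.1, a.2.2) (b.1, b.2.2) else 0

section aux
variable {k : Type*} [CommRing k] {n : ℕ}

theorem L12_mul (A B : Matrix (Fin n × Fin n) (Fin n × Fin n) k) :
    L12 (A * B) = L12 A * L12 B := by
  ext ⟨a, b, c⟩ ⟨d, e, f⟩
  simp only [L12, Matrix.mul_apply, Matrix.of_apply, Fintype.sum_prod_type]
  split_ifs with h <;> simp [h]

theorem L13_mul (A B : Matrix (Fin n × Fin n) (Fin n × Fin n) k) :
    L13 (A * B) = L13 A * L13 B := by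
  ext ⟨a, b, c⟩ ⟨d, e, f⟩
  simp only [L13, Matrix.mul_apply, Matrix.of_apply, Fintype.sum_prod_type]
  simp only [ite_mul, mul_ite, zero_mul, mul_zero]
  split_ifs with h <;> simp [h, Finset.sum_ite_irrel]

theorem L23_mul (A B : Matrix (Fin n × Fin n) (Fin n × Fin n) k) :
    L23 (A * B) = L23 A * L23 B := by
  ext ⟨a, b, c⟩ ⟨d, e, f⟩
  simp only [L23, Matrix.mul_apply, Matrix.of_apply, Fintype.sum_prod_type]
  split_ifs with h <;> simp [h, Finset.sum_ite_irrel]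

theorem L12_one : L12 (1 : Matrix (Fin n × Fin n) (Fin n × Fin n) k) = 1 := by
  ext ⟨a, b, c⟩ ⟨d, e, f⟩
  simp only [L12, Matrix.one_apply, Matrix.of_apply, Prod.mk.injEq]
  grind

theorem L13_one : L13 (1 : Matrix (Fin n × Fin n) (Fin n × Fin n) k) = 1 := by
  ext ⟨a, b, c⟩ ⟨d, e, f⟩
  simp only [L13, Matrix.one_apply, Matrix.of_apply, Prod.mk.injEq]
  grind

theorem L23_one : L23 (1 : Matrix (Fin n × Fin n) (Fin n × Fin n) k) = 1 := by
  ext ⟨a, b, c⟩ ⟨d, e, f⟩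
  simp only [L23, Matrix.one_apply, Matrix.of_apply, Prod.mk.injEq]
  grind

theorem e1 (A B C : Matrix (Fin n × Fin n) (Fin n × Fin n) k) (a b c d e f : Fin n) :
    (L12 A * L13 B * L23 C) (a, b, c) (d, e, f) =
      ∑ x, ∑ y, ∑ z, A (a, b) (x, y) * B (x, c) (d, z) * C (y, z) (e, f) := by
  simp [L12, L13, L23, Matrix.mul_apply, Fintype.sum_prod_type, Finset.sum_mul, Finset.sum_ite_irrel]
  rw [Finset.sum_comm_cycle]

theorem e2 (A B C : Matrix (Fin n × Fin n) (Fin n × Fin n) k) (a b c d e f : Fin n) :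
    (L23 C * L13 B * L12 A) (a, b, c) (d, e, f) =
      ∑ x, ∑ y, ∑ z, A (x, y) (d, e) * B (a, z) (x, f) * C (b, c) (y, z) := by
  simp [L12, L13, L23, Matrix.mul_apply, Fintype.sum_prod_type, Finset.sum_mul, Finset.sum_ite_irrel]
  repeat (refine Finset.sum_congr rfl fun _ _ => ?_)
  ring

theorem e3 (A B C : Matrix (Fin n × Fin n) (Fin n × Fin n) k) (a b c d e f : Fin n) :
    (L23 C * L12 A * L13 B) (a, b, c) (d, e, f) =
      ∑ x, ∑ y, ∑ z, A (a, y) (x, e) * B (x, z) (d, f) * C (b, c) (y, z) := by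
  simp [L12, L13, L23, Matrix.mul_apply, Fintype.sum_prod_type, Finset.sum_mul, Finset.sum_ite_irrel]
  refine Finset.sum_congr rfl fun x _ => ?_
  rw [Finset.sum_comm]
  repeat (refine Finset.sum_congr rfl fun _ _ => ?_)
  ring

theorem e4 (A B C : Matrix (Fin n × Fin n) (Fin n × Fin n) k) (a b c d e f : Fin n) :
    (L13 B * L12 A * L23 C) (a, b, c) (d, e, f) =
      ∑ x, ∑ y, ∑ z, A (x, b) (d, y) * B (a, c) (x, z) * C (y, z) (e, f) := by
  simp [L12, L13, L23, Matrix.mul_apply, Fintype.sum_prod_type, Finset.sum_mul, Finset.sum_ite_irrel]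
  rw [Finset.sum_comm_cycle]
  repeat (refine Finset.sum_congr rfl fun _ _ => ?_)
  ring

theorem e5 (A B C : Matrix (Fin n × Fin n) (Fin n × Fin n) k) (a b c d e f : Fin n) :
    (L12 A * L23 C * L13 B) (a, b, c) (d, e, f) =
      ∑ x, ∑ y, ∑ z, A (a, b) (x, y) * B (x, z) (d, f) * C (y, c) (e, z) := by
  simp [L12, L13, L23, Matrix.mul_apply, Fintype.sum_prod_type, Finset.sum_mul, Finset.sum_ite_irrel]
  refine Finset.sum_congr rfl fun x _ => ?_
  rw [Finset.sum_comm]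
  repeat (refine Finset.sum_congr rfl fun _ _ => ?_)
  ring

theorem e6 (A B C : Matrix (Fin n × Fin n) (Fin n × Fin n) k) (a b c d e f : Fin n) :
    (L13 B * L23 C * L12 A) (a, b, c) (d, e, f) =
      ∑ x, ∑ y, ∑ z, A (x, y) (d, e) * B (a, c) (x, z) * C (b, z) (y, f) := by
  simp [L12, L13, L23, Matrix.mul_apply, Fintype.sum_prod_type, Finset.sum_mul, Finset.sum_ite_irrel]
  repeat (refine Finset.sum_congr rfl fun _ _ => ?_)
  ring


theorem conj_aux {M : Type*} [Ring M] {r a b a' b' : M} (ha : a * a' = 1) (ha' : a' * a = 1)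
    (hb : b * b' = 1) (hb' : b' * b = 1) (h : r * a * b = b * a * r) :
    r * b' * a' = a' * b' * r := by
  calc r * b' * a' = a' * (b' * b) * a * r * b' * a' := by rw [hb', mul_one, ha', one_mul]
    _ = a' * b' * (b * a * r) * b' * a' := by noncomm_ring
    _ = a' * b' * r * (a * (b * b') * a') := by rw [← h]; noncomm_ring
    _ = a' * b' * r := by rw [hb, mul_one, ha, mul_one]

end aux

/-- if `R` is an invertible solution of the QYBE with `R^{t₂}` and `(R⁻¹)^{t₁}`
invertible, then
(i) `(Rᵗ)₂₃·((R^{t₂})⁻¹)₁₃·((R^{t₂})⁻¹)₁₂ = ((R^{t₂})⁻¹)₁₂·((R^{t₂})⁻¹)₁₃·(Rᵗ)₂₃`;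
(ii) `(Rᵗ)₁₂·(((R⁻¹)^{t₁})⁻¹)₂₃·(((R⁻¹)^{t₁})⁻¹)₁₃ = (((R⁻¹)^{t₁})⁻¹)₁₃·(((R⁻¹)^{t₁})⁻¹)₂₃·(Rᵗ)₁₂`. -/
theorem stmt3 {k : Type*} [CommRing k] {n : ℕ} (hn : 0 < n)
    (R : Matrix (Fin n × Fin n) (Fin n × Fin n) k)
    (hR : IsUnit R)
    (hQYBE : L12 R * L13 R * L23 R = L23 R * L13 R * L12 R)
    (ht2 : IsUnit (pt2 R)) (ht1 : IsUnit (pt1 R⁻¹)) :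
    (L23 Rᵀ * L13 (pt2 R)⁻¹ * L12 (pt2 R)⁻¹ = L12 (pt2 R)⁻¹ * L13 (pt2 R)⁻¹ * L23 Rᵀ) ∧
    (L12 Rᵀ * L23 (pt1 R⁻¹)⁻¹ * L13 (pt1 R⁻¹)⁻¹ = L13 (pt1 R⁻¹)⁻¹ * L23 (pt1 R⁻¹)⁻¹ * L12 Rᵀ) := by
  rw [Matrix.isUnit_iff_isUnit_det] at hR ht1 ht2
  constructor
  · have key : L23 Rᵀ * L12 (pt2 R) * L13 (pt2 R) = L13 (pt2 R) * L12 (pt2 R) * L23 Rᵀ := by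
      ext ⟨a, b, c⟩ ⟨d, e, f⟩
      have h := congr_fun (congr_fun hQYBE (a, e, f)) (d, b, c)
      rw [e1, e2] at h
      rw [e3, e4]
      exact h
    refine conj_aux ?_ ?_ ?_ ?_ key
    · rw [← L12_mul, Matrix.mul_nonsing_inv _ ht2, L12_one]
    · rw [← L12_mul, Matrix.nonsing_inv_mul _ ht2, L12_one]
    · rw [← L13_mul, Matrix.mul_nonsing_inv _ ht2, L13_one]
    · rw [← L13_mul, Matrix.nonsing_inv_mul _ ht2, L13_one]
  · have q : L12 R * L23 R⁻¹ * L13 R⁻¹ = L13 R⁻¹ * L23 R⁻¹ * L12 R := by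
      refine conj_aux ?_ ?_ ?_ ?_ hQYBE
      · rw [← L13_mul, Matrix.mul_nonsing_inv _ hR, L13_one]
      · rw [← L13_mul, Matrix.nonsing_inv_mul _ hR, L13_one]
      · rw [← L23_mul, Matrix.mul_nonsing_inv _ hR, L23_one]
      · rw [← L23_mul, Matrix.nonsing_inv_mul _ hR, L23_one]
    have key : L12 Rᵀ * L13 (pt1 R⁻¹) * L23 (pt1 R⁻¹) =
        L23 (pt1 R⁻¹) * L13 (pt1 R⁻¹) * L12 Rᵀ := by
      ext ⟨a, b, c⟩ ⟨d, e, f⟩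
      have h := congr_fun (congr_fun q (d, e, c)) (a, b, f)
      rw [e5, e6] at h
      rw [e1, e2]
      exact h.symm
    refine conj_aux ?_ ?_ ?_ ?_ key
    · rw [← L13_mul, Matrix.mul_nonsing_inv _ ht1, L13_one]
    · rw [← L13_mul, Matrix.nonsing_inv_mul _ ht1, L13_one]
    · rw [← L23_mul, Matrix.mul_nonsing_inv _ ht1, L23_one]
    · rw [← L23_mul, Matrix.nonsing_inv_mul _ ht1, L23_one]
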